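/- Fix t ∈ ℝ, a natural number k, and a real number λ with λ > k. Then the function g_λ : (0,∞) → ℝ defined by g_λ(τ) = f₊^λ(t² − τ²) satisfies L^k g_λ = g_{λ−k} on (0,∞), where L is the operator sending a differentiable function g on (0,∞) to the function τ ↦ −g′(τ)/(2τ); in particular each intermediate function L^j g_λ (0 ≤ j < k) is differentiable on (0,∞). -/

import Mathlib

/-!
The Gelfand–Shilov functions are normalised so that `(f₊^μ)′ = f₊^(μ-1)`. For `μ > 1` this holds in
the classical sense on the whole line (`hasDerivAt_gelfandShilov`): away from `0` it is the power
rule together with `Γ(μ+1) = μ Γ(μ)`, and at `0` both sides vanish because `ς^μ = o(ς)`.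
By the chain rule with inner function `t² − τ²`, whose derivative is `−2τ`, the factor in `L`
cancels exactly, so `L` lowers the index by one (`Lop_gelfandShilov`). Iterating, the `j`-th step
with `j < k` acts on index `λ − j > 1`, where the classical derivative exists.
-/

/-- The Gelfand–Shilov function `f₊^μ(ς) = ς^μ / Γ(μ+1)` for `ς > 0`, and `0` for `ς ≤ 0`. -/
noncomputable def gelfandShilov (μ : ℝ) (ς : ℝ) : ℝ :=
  if 0 < ς then ς ^ μ / Real.Gamma (μ + 1) else 0

/-- The operator `L` sending a function `g` to `τ ↦ −g′(τ)/(2τ)`. -/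
noncomputable def Lop (g : ℝ → ℝ) : ℝ → ℝ := fun τ => -(deriv g τ) / (2 * τ)

/-- Classical differentiability on all of `ℝ`; `1 < μ` is what makes the derivative exist at `0`. -/
theorem hasDerivAt_gelfandShilov {μ : ℝ} (hμ : 1 < μ) (x : ℝ) :
    HasDerivAt (gelfandShilov μ) (gelfandShilov (μ - 1) x) x := by
  rcases lt_trichotomy x 0 with hx | rfl | hx
  · have h0 : gelfandShilov (μ - 1) x = 0 := by simp [gelfandShilov, hx.le]
    rw [h0]
    refine (hasDerivAt_const x (0 : ℝ)).congr_of_eventuallyEq ?_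
    filter_upwards [Iio_mem_nhds hx] with y hy
    have : ¬ 0 < y := not_lt.mpr (le_of_lt hy)
    simp [gelfandShilov, this]
  · have h0 : gelfandShilov (μ - 1) 0 = 0 := by simp [gelfandShilov]
    have hpow : HasDerivAt (fun y : ℝ => y ^ μ / Real.Gamma (μ + 1)) 0 0 := by
      have h := (Real.hasDerivAt_rpow_const (x := 0) (p := μ) (Or.inr hμ.le)).div_const
        (Real.Gamma (μ + 1))
      rwa [Real.zero_rpow (by linarith), mul_zero, zero_div] at h
    rw [h0]
    rw [hasDerivAt_iff_isLittleO] at hpow ⊢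
    have hz : (0 : ℝ) ^ μ = 0 := Real.zero_rpow (by linarith)
    have hg : gelfandShilov μ 0 = 0 := by simp [gelfandShilov]
    simp only [hz, hg, zero_div, smul_zero, sub_zero] at hpow ⊢
    -- The power is `o(y)` at `0`, and truncation only replaces some of its values by `0`.
    refine Asymptotics.IsBigO.trans_isLittleO (Asymptotics.isBigO_of_le _ fun y => ?_) hpow
    unfold gelfandShilov
    split_ifs
    · exact le_rfl
    · rw [norm_zero]
      exact norm_nonneg _
  · have hd := (Real.hasDerivAt_rpow_const (x := x) (p := μ) (Or.inl hx.ne')).div_const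
      (Real.Gamma (μ + 1))
    have hval : gelfandShilov (μ - 1) x = μ * x ^ (μ - 1) / Real.Gamma (μ + 1) := by
      have hμ0 : μ ≠ 0 := by linarith
      rw [gelfandShilov, if_pos hx, sub_add_cancel, Real.Gamma_add_one hμ0,
        mul_div_mul_left _ _ hμ0]
    rw [hval]
    refine hd.congr_of_eventuallyEq ?_
    filter_upwards [Ioi_mem_nhds hx] with y hy
    exact if_pos hy

theorem hasDerivAt_gelfandShilov_sq_sub {μ : ℝ} (hμ : 1 < μ) (t τ : ℝ) :
    HasDerivAt (fun τ : ℝ => gelfandShilov μ (t ^ 2 - τ ^ 2))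
      (gelfandShilov (μ - 1) (t ^ 2 - τ ^ 2) * (-(2 * τ))) τ := by
  have hin : HasDerivAt (fun τ : ℝ => t ^ 2 - τ ^ 2) (-(2 * τ)) τ := by
    simpa using (hasDerivAt_pow 2 τ).const_sub (t ^ 2)
  exact (hasDerivAt_gelfandShilov hμ (t ^ 2 - τ ^ 2)).comp τ hin

/-- Since `L` is local, it suffices that `g` agrees with `g_μ` on the open half-line. -/
theorem Lop_gelfandShilov {μ : ℝ} (hμ : 1 < μ) (t : ℝ) {g : ℝ → ℝ}
    (hg : Set.EqOn g (fun τ : ℝ => gelfandShilov μ (t ^ 2 - τ ^ 2)) (Set.Ioi 0)) :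
    Set.EqOn (Lop g) (fun τ : ℝ => gelfandShilov (μ - 1) (t ^ 2 - τ ^ 2)) (Set.Ioi 0) := by
  intro τ hτ
  have hτ0 : τ ≠ 0 := ne_of_gt hτ
  have hd : deriv g τ = gelfandShilov (μ - 1) (t ^ 2 - τ ^ 2) * (-(2 * τ)) :=
    (Filter.EventuallyEq.deriv_eq (hg.eventuallyEq_of_mem (Ioi_mem_nhds hτ))).trans
      (hasDerivAt_gelfandShilov_sq_sub hμ t τ).deriv
  simp only [Lop, hd]
  field_simp

theorem Lop_iterate_eqOn (t lam : ℝ) (j : ℕ) (hj : (j : ℝ) < lam) :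
    Set.EqOn (Lop^[j] (fun τ : ℝ => gelfandShilov lam (t ^ 2 - τ ^ 2)))
      (fun τ : ℝ => gelfandShilov (lam - j) (t ^ 2 - τ ^ 2)) (Set.Ioi 0) := by
  induction j with
  | zero => simp [Set.EqOn]
  | succ j ih =>
    push_cast at hj
    have h := Lop_gelfandShilov (by linarith) t (ih (by linarith))
    rw [Function.iterate_succ_apply']
    push_cast
    rwa [← sub_sub]

/-- Fix `t ∈ ℝ`, `k ∈ ℕ` and real `λ > k`.  The function `g_λ(τ) = f₊^λ(t² − τ²)` satisfies
`L^k g_λ = g_{λ−k}` on `(0,∞)`, and each intermediate function `L^j g_λ` (`0 ≤ j < k`)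
is differentiable on `(0,∞)`. -/
theorem Lop_iterate_gelfandShilov (t : ℝ) (k : ℕ) (lam : ℝ) (hlam : (k : ℝ) < lam) :
    (∀ j < k, DifferentiableOn ℝ
      (Lop^[j] (fun τ : ℝ => gelfandShilov lam (t ^ 2 - τ ^ 2))) (Set.Ioi 0)) ∧
    Set.EqOn (Lop^[k] (fun τ : ℝ => gelfandShilov lam (t ^ 2 - τ ^ 2)))
      (fun τ : ℝ => gelfandShilov (lam - k) (t ^ 2 - τ ^ 2)) (Set.Ioi 0) := by
  refine ⟨fun j hj => ?_, Lop_iterate_eqOn t lam k hlam⟩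
  have hj' : (j : ℝ) + 1 ≤ k := by exact_mod_cast hj
  have hdiff : DifferentiableOn ℝ
      (fun τ : ℝ => gelfandShilov (lam - j) (t ^ 2 - τ ^ 2)) (Set.Ioi 0) := fun τ _ =>
    (hasDerivAt_gelfandShilov_sq_sub (by linarith) t τ).differentiableAt.differentiableWithinAt
  exact hdiff.congr (Lop_iterate_eqOn t lam j (by linarith))
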